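/- arXiv:2302.14755 — 6 statements merged into one kernel-verified Lean document; each statement's English description precedes it below -/
import Mathlib

section
/- Let k be an odd natural number and let P : Fin k → Matrix (Fin 2) (Fin 2) ℂ be such that each P i is either the Pauli matrix X or the Pauli matrix Z. Let S be the k-fold Kronecker product of the P i (the matrix indexed by (Fin k → Fin 2) with entry S x y = ∏ i, (P i) (x i) (y i)), and let S' be the k-fold Kronecker product of the matrices H * (P i) * H (which is H^{⊗k} S H^{⊗k}). Then S and S' anticommute: S * S' = -(S' * S). (This is the key anticommutation step in Case II of the proof of Lemma 3.3: a k-qubit Pauli consisting only of X's and Z's, with an odd total number of factors, anticommutes with its conjugation by H^{⊗k}.) -/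
open Matrix

noncomputable def PauliX : Matrix (Fin 2) (Fin 2) ℂ := !![0, 1; 1, 0]

noncomputable def PauliZ : Matrix (Fin 2) (Fin 2) ℂ := !![1, 0; 0, -1]

noncomputable def Hadamard : Matrix (Fin 2) (Fin 2) ℂ :=
  (1 / (Real.sqrt 2 : ℂ)) • !![1, 1; 1, -1]

/-- The `k`-fold Kronecker product of single-qubit matrices. -/
noncomputable def kronPow {k : ℕ} (P : Fin k → Matrix (Fin 2) (Fin 2) ℂ) :
    Matrix (Fin k → Fin 2) (Fin k → Fin 2) ℂ :=
  Matrix.of fun x y => ∏ i, P i (x i) (y i)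

theorem kronPow_mul_aux {k : ℕ} (A B : Fin k → Matrix (Fin 2) (Fin 2) ℂ) :
    kronPow A * kronPow B = kronPow (fun i => A i * B i) := by
  ext x y
  simp only [kronPow, Matrix.mul_apply, Matrix.of_apply, ← Finset.prod_mul_distrib]
  rw [Finset.prod_univ_sum, Fintype.piFinset_univ]

theorem hadamard_sq_aux : (1 / (Real.sqrt 2 : ℂ)) * (1 / (Real.sqrt 2 : ℂ)) = 1 / 2 := by
  have h : (Real.sqrt 2 : ℂ) * (Real.sqrt 2 : ℂ) = 2 := by
    rw [← Complex.ofReal_mul, Real.mul_self_sqrt (by norm_num)]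
    norm_num
  rw [div_mul_div_comm, h, one_mul]

theorem HXH_aux : Hadamard * PauliX * Hadamard = PauliZ := by
  simp only [Hadamard, PauliX, PauliZ, Matrix.smul_mul, Matrix.mul_smul, smul_smul,
    hadamard_sq_aux]
  ext i j
  fin_cases i <;> fin_cases j <;> simp <;> norm_num

theorem HZH_aux : Hadamard * PauliZ * Hadamard = PauliX := by
  simp only [Hadamard, PauliX, PauliZ, Matrix.smul_mul, Matrix.mul_smul, smul_smul,
    hadamard_sq_aux]
  ext i j
  fin_cases i <;> fin_cases j <;> simp <;> norm_num

theorem XZ_aux : PauliX * PauliZ = -(PauliZ * PauliX) := by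
  ext i j
  fin_cases i <;> fin_cases j <;> simp [PauliX, PauliZ]

theorem odd_XZ_pauli_anticommutes_with_H_conjugate
    (k : ℕ) (hk : Odd k) (P : Fin k → Matrix (Fin 2) (Fin 2) ℂ)
    (hP : ∀ i, P i = PauliX ∨ P i = PauliZ) :
    kronPow P * kronPow (fun i => Hadamard * P i * Hadamard) =
      -(kronPow (fun i => Hadamard * P i * Hadamard) * kronPow P) := by
  rw [kronPow_mul_aux, kronPow_mul_aux]
  have h : ∀ i, P i * (Hadamard * P i * Hadamard) = -((Hadamard * P i * Hadamard) * P i) := by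
    intro i
    rcases hP i with h | h <;> rw [h]
    · rw [HXH_aux, XZ_aux]
    · rw [HZH_aux, XZ_aux, neg_neg]
  ext x y
  simp only [kronPow, Matrix.of_apply, Matrix.neg_apply, h, Finset.prod_neg,
    Finset.card_univ, Fintype.card_fin, hk.neg_one_pow, neg_one_mul]
end

section
/- Let D = !![cos(π/8), -sin(π/8); sin(π/8), cos(π/8)] as a 2×2 complex matrix. For every vector η in the list of six single-qubit stabilizer states — ![1,0], ![0,1], (1/√2)•![1,1], (1/√2)•![1,-1], (1/√2)•![1, i], (1/√2)•![1, -i] — the squared modulus of the second component of D.mulVec η satisfies ‖(D.mulVec η) 1‖² ≥ sin²(π/8). (Lemma B.2 of the paper: every single-qubit stabilizer state has energy at least sin²(π/8) under the rotated projector Dᴴ|1⟩⟨1|D.) -/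
open Matrix

noncomputable def Drot : Matrix (Fin 2) (Fin 2) ℂ :=
  !![(Real.cos (Real.pi / 8) : ℂ), -(Real.sin (Real.pi / 8) : ℂ);
     (Real.sin (Real.pi / 8) : ℂ), (Real.cos (Real.pi / 8) : ℂ)]

lemma Drot_aux (z : ℂ) : ‖(Drot.mulVec ((1 / (Real.sqrt 2 : ℂ)) • ![1, z])) 1‖ ^ 2 =
    ((Real.sin (Real.pi / 8) + Real.cos (Real.pi / 8) * z.re) ^ 2
      + (Real.cos (Real.pi / 8) * z.im) ^ 2) / 2 := by
  have h : (Drot.mulVec ((1 / (Real.sqrt 2 : ℂ)) • ![1, z])) 1 =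
      (1 / (Real.sqrt 2 : ℂ)) * ((Real.sin (Real.pi / 8) : ℂ) + (Real.cos (Real.pi / 8) : ℂ) * z) := by
    rw [Matrix.mulVec_smul]
    simp only [Drot, Matrix.mulVec, dotProduct, Fin.sum_univ_two, Pi.smul_apply, smul_eq_mul,
      Matrix.of_apply, Matrix.cons_val_zero, Matrix.cons_val_one, mul_one]
  rw [h, norm_mul, mul_pow, norm_div, norm_one, Complex.norm_real, div_pow, Real.norm_eq_abs,
    sq_abs, Real.sq_sqrt (by norm_num), Complex.sq_norm, Complex.normSq_apply]
  simp only [Complex.add_re, Complex.add_im, Complex.re_ofReal_mul, Complex.im_ofReal_mul,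
    Complex.ofReal_re, Complex.ofReal_im]
  ring

theorem single_qubit_stabilizer_energy_lower_bound :
    ∀ η ∈ [(![1, 0] : Fin 2 → ℂ), ![0, 1],
            (1 / (Real.sqrt 2 : ℂ)) • ![1, 1],
            (1 / (Real.sqrt 2 : ℂ)) • ![1, -1],
            (1 / (Real.sqrt 2 : ℂ)) • ![1, Complex.I],
            (1 / (Real.sqrt 2 : ℂ)) • ![1, -Complex.I]],
      Real.sin (Real.pi / 8) ^ 2 ≤ ‖(Drot.mulVec η) 1‖ ^ 2 := by
  have h1 := Real.sin_sq_add_cos_sq (Real.pi / 8)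
  have e : 2 * (Real.pi / 8) = Real.pi / 4 := by ring
  have h2 := Real.sin_two_mul (Real.pi / 8)
  have h3 := Real.cos_two_mul (Real.pi / 8)
  rw [e, Real.sin_pi_div_four] at h2
  rw [e, Real.cos_pi_div_four] at h3
  have h4 := Real.sqrt_nonneg 2
  intro η hη
  simp only [List.mem_cons, List.not_mem_nil, or_false] at hη
  rcases hη with rfl | rfl | rfl | rfl | rfl | rfl
  · have h : (Drot.mulVec ![1, 0]) 1 = (Real.sin (Real.pi / 8) : ℂ) := by
      simp [Drot, Matrix.mulVec, dotProduct, Fin.sum_univ_two]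
    rw [h, Complex.norm_real, Real.norm_eq_abs, sq_abs]
  · have h : (Drot.mulVec ![0, 1]) 1 = (Real.cos (Real.pi / 8) : ℂ) := by
      simp [Drot, Matrix.mulVec, dotProduct, Fin.sum_univ_two]
    rw [h, Complex.norm_real, Real.norm_eq_abs, sq_abs]
    linarith
  all_goals
    rw [Drot_aux]
    simp only [Complex.one_re, Complex.one_im, Complex.neg_re, Complex.neg_im, Complex.I_re,
      Complex.I_im]
    nlinarith
end

section
/- Let Π := Dᴴ * !![0,0;0,1] * D (the rotated single-qubit projector Dᴴ|1⟩⟨1|D). For every θ ∈ ℝ and every σ in the set {X, -X, Y, -Y, Z, -Z} of signed non-identity Pauli matrices, the state ρ = (1/2 : ℂ)•1 + ((Real.sin (2θ))/4 : ℂ)•σ satisfies Re(trace (ρ * Π)) ≥ sin²(π/8). (This is Case II.1 in the proof of Lemma B.7: a single-qubit reduced state of the form ½I + ¼sin(2θ)σ has energy at least sin²(π/8) under the rotated projector.) -/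
open Matrix

noncomputable def PauliY : Matrix (Fin 2) (Fin 2) ℂ := !![0, -Complex.I; Complex.I, 0]

/-- The rotated single-qubit projector `Dᴴ |1⟩⟨1| D`. -/
noncomputable def rotProj : Matrix (Fin 2) (Fin 2) ℂ := Drotᴴ * !![0, 0; 0, 1] * Drot

theorem energy_lower_bound_case_II_1
    (θ : ℝ) (σ : Matrix (Fin 2) (Fin 2) ℂ)
    (hσ : σ = PauliX ∨ σ = -PauliX ∨ σ = PauliY ∨ σ = -PauliY ∨ σ = PauliZ ∨ σ = -PauliZ) :
    Real.sin (Real.pi / 8) ^ 2 ≤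
      (Matrix.trace (((1 / 2 : ℂ) • (1 : Matrix (Fin 2) (Fin 2) ℂ) +
        ((Real.sin (2 * θ) / 4 : ℝ) : ℂ) • σ) * rotProj)).re := by
  have h1 := Real.sin_sq_add_cos_sq (Real.pi / 8)
  have h2 : 2 * Real.sin (Real.pi / 8) * Real.cos (Real.pi / 8) = √2 / 2 := by
    rw [← Real.sin_two_mul, ← Real.sin_pi_div_four]; congr 1; ring
  have h3 : Real.cos (Real.pi / 8) ^ 2 - Real.sin (Real.pi / 8) ^ 2 = √2 / 2 := by
    rw [← Real.cos_two_mul', ← Real.cos_pi_div_four]; congr 1; ring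
  have h4 := Real.neg_one_le_sin (2 * θ)
  have h5 := Real.sin_le_one (2 * θ)
  have h6 : 0 ≤ √2 := Real.sqrt_nonneg 2
  have hP : rotProj = !![((Real.sin (Real.pi / 8) ^ 2 : ℝ) : ℂ),
      ((Real.sin (Real.pi / 8) * Real.cos (Real.pi / 8) : ℝ) : ℂ);
      ((Real.sin (Real.pi / 8) * Real.cos (Real.pi / 8) : ℝ) : ℂ),
      ((Real.cos (Real.pi / 8) ^ 2 : ℝ) : ℂ)] := by
    unfold rotProj Drot
    generalize Real.sin (Real.pi / 8) = s
    generalize Real.cos (Real.pi / 8) = c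
    ext i j
    fin_cases i <;> fin_cases j <;>
      simp [Matrix.mul_apply, Fin.sum_univ_two, Complex.conj_ofReal, pow_two, mul_comm]
  rw [hP]
  generalize Real.sin (Real.pi / 8) = s at *
  generalize Real.cos (Real.pi / 8) = c at *
  generalize Real.sin (2 * θ) = t at *
  generalize √2 = r at *
  have key : ∀ x y z : ℝ, (Matrix.trace (((1 / 2 : ℂ) • (1 : Matrix (Fin 2) (Fin 2) ℂ) +
        ((t / 4 : ℝ) : ℂ) • ((x : ℂ) • PauliX + (y : ℂ) • PauliY + (z : ℂ) • PauliZ)) *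
        !![((s ^ 2 : ℝ) : ℂ), ((s * c : ℝ) : ℂ); ((s * c : ℝ) : ℂ), ((c ^ 2 : ℝ) : ℂ)])).re
      = (s ^ 2 + c ^ 2) / 2 + t / 4 * (x * (2 * s * c) - z * (c ^ 2 - s ^ 2)) := by
    intro x y z
    simp only [Matrix.trace, Matrix.diag, Matrix.mul_apply, Fin.sum_univ_two, PauliX, PauliY,
      PauliZ]
    simp [-Complex.ofReal_mul, -Complex.ofReal_pow, -Complex.ofReal_div]
    ring
  have e1 := key 1 0 0
  have e2 := key (-1) 0 0
  have e3 := key 0 1 0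
  have e4 := key 0 (-1) 0
  have e5 := key 0 0 1
  have e6 := key 0 0 (-1)
  simp only [Complex.ofReal_neg, Complex.ofReal_one, Complex.ofReal_zero, zero_smul, neg_smul,
    one_smul, add_zero, zero_add] at e1 e2 e3 e4 e5 e6
  have m1 : 0 ≤ (1 - t) * r := mul_nonneg (by linarith) h6
  have m2 : 0 ≤ (1 + t) * r := mul_nonneg (by linarith) h6
  rcases hσ with h | h | h | h | h | h <;> subst h
  · rw [e1, h2, h3]; nlinarith
  · rw [e2, h2, h3]; nlinarith
  · rw [e3, h2, h3]; nlinarith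
  · rw [e4, h2, h3]; nlinarith
  · rw [e5, h2, h3]; nlinarith
  · rw [e6, h2, h3]; nlinarith
end

section
/- Let Π := Dᴴ * !![0,0;0,1] * D (the rotated single-qubit projector Dᴴ|1⟩⟨1|D). Let P be one of the matrices X, -X, Z, -Z, and let Q be any element of {X, -X, Y, -Y, Z, -Z}. Then for every θ ∈ ℝ, the matrix ρ = (1/2 : ℂ)•1 + ((Real.cos (2θ))/2 : ℂ)•Q + ((Real.sin (2θ))/4 : ℂ)•(Complex.I•(P*Q - Q*P)) satisfies Re(trace (ρ * Π)) ≥ sin²(π/8). (This is Case II.2.a in the proof of Lemma B.7: when the rotation Pauli P is not ±Y, the reduced state ½I + ½cos(2θ)P* + ¼sin(2θ)·i[P,P*] has energy at least sin²(π/8) under the rotated projector, regardless of θ.) -/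
open Matrix

theorem rot_aux (s c : ℝ) :
    (!![(c : ℂ), -(s : ℂ); (s : ℂ), (c : ℂ)])ᴴ * !![0, 0; 0, 1] * !![(c : ℂ), -(s : ℂ); (s : ℂ), (c : ℂ)]
      = !![((s * s : ℝ) : ℂ), ((s * c : ℝ) : ℂ); ((s * c : ℝ) : ℂ), ((c * c : ℝ) : ℂ)] := by
  ext i j
  fin_cases i <;> fin_cases j <;>
    simp [Matrix.mul_apply, Fin.sum_univ_two, Matrix.conjTranspose_apply] <;> ring

set_option maxHeartbeats 4000000 in
theorem energy_lower_bound_case_II_2a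
    (θ : ℝ) (P Q : Matrix (Fin 2) (Fin 2) ℂ)
    (hP : P = PauliX ∨ P = -PauliX ∨ P = PauliZ ∨ P = -PauliZ)
    (hQ : Q = PauliX ∨ Q = -PauliX ∨ Q = PauliY ∨ Q = -PauliY ∨ Q = PauliZ ∨ Q = -PauliZ) :
    Real.sin (Real.pi / 8) ^ 2 ≤
      (Matrix.trace (((1 / 2 : ℂ) • (1 : Matrix (Fin 2) (Fin 2) ℂ) +
        ((Real.cos (2 * θ) / 2 : ℝ) : ℂ) • Q +
        ((Real.sin (2 * θ) / 4 : ℝ) : ℂ) • (Complex.I • (P * Q - Q * P))) * rotProj)).re := by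
  have h1 : Real.sin (Real.pi / 8) ^ 2 + Real.cos (Real.pi / 8) ^ 2 = 1 := Real.sin_sq_add_cos_sq _
  have e : Real.pi / 4 = 2 * (Real.pi / 8) := by ring
  have h2 : 2 * Real.sin (Real.pi / 8) * Real.cos (Real.pi / 8)
      = 2 * Real.cos (Real.pi / 8) ^ 2 - 1 := by
    rw [← Real.sin_two_mul, ← Real.cos_two_mul, ← e, Real.sin_pi_div_four, Real.cos_pi_div_four]
  have h3 : 0 ≤ 2 * Real.cos (Real.pi / 8) ^ 2 - 1 := by
    rw [← Real.cos_two_mul, ← e, Real.cos_pi_div_four]; positivity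
  have a1 := Real.cos_le_one (2 * θ)
  have a2 := Real.neg_one_le_cos (2 * θ)
  have a3 := Real.sin_le_one (2 * θ)
  have a4 := Real.neg_one_le_sin (2 * θ)
  rw [rotProj, Drot, rot_aux]
  generalize Real.sin (Real.pi / 8) = s at *
  generalize Real.cos (Real.pi / 8) = c at *
  generalize Real.cos (2 * θ) = C at *
  generalize Real.sin (2 * θ) = S at *
  have k1 : s * s = 1 - c * c := by linarith
  have k2 : s * c = c * c - 1 / 2 := by linarith
  have k3 : s ^ 2 = 1 - c * c := by linarith
  rw [k1, k2, k3]
  have h4 : 0 ≤ 2 * (c * c) - 1 := by linarith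
  generalize c * c = d at *
  have b1 := mul_nonneg h4 (sub_nonneg.2 a1)
  have b2 := mul_nonneg h4 (sub_nonneg.2 a2)
  have b3 := mul_nonneg h4 (sub_nonneg.2 a3)
  have b4 := mul_nonneg h4 (sub_nonneg.2 a4)
  rcases hP with rfl | rfl | rfl | rfl <;> rcases hQ with rfl | rfl | rfl | rfl | rfl | rfl <;>
    simp [PauliX, PauliY, PauliZ, Matrix.trace, Matrix.mul_apply, Fin.sum_univ_two] <;>
    nlinarith
end

section
/- Let r and d be natural numbers with d ≥ 1. The number of matrices A : Matrix (Fin r) (Fin d) (ZMod 2) such that the all-ones vector (fun _ => 1 : Fin d → ZMod 2) lies in the span of the rows of A (i.e. in Submodule.span (ZMod 2) {A i | i : Fin r}) is at most (2^r - 1) * 2^(d*(r-1)). Equivalently, for A drawn uniformly at random, the probability that the all-ones vector lies in the row span of A is at most (2^r - 1)/2^d. (Counting form of part 2 of Lemma 4.3 of the paper, proved there by induction on the number of rows.) -/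
theorem count_allOnes_in_rowSpan_le (r d : ℕ) (hd : 1 ≤ d) :
    Nat.card {A : Matrix (Fin r) (Fin d) (ZMod 2) //
        (fun _ => 1 : Fin d → ZMod 2) ∈ Submodule.span (ZMod 2) (Set.range A)} ≤
      (2 ^ r - 1) * 2 ^ (d * (r - 1)) := by
  have key : ∀ A : {A : Matrix (Fin r) (Fin d) (ZMod 2) //
        (fun _ => 1 : Fin d → ZMod 2) ∈ Submodule.span (ZMod 2) (Set.range A)},
      ∃ c : {c : Fin r → ZMod 2 // c ≠ 0}, ∀ k, ∑ i, c.1 i * A.1 i k = 1 := by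
    rintro ⟨A, hA⟩
    obtain ⟨c, hc⟩ := (Submodule.mem_span_range_iff_exists_fun (ZMod 2)).1 hA
    have h : ∀ k, ∑ i, c i * A i k = 1 := by
      intro k
      have := congrFun hc k
      rw [Finset.sum_apply] at this
      simpa using this
    refine ⟨⟨c, ?_⟩, h⟩
    rintro rfl
    have := h ⟨0, hd⟩
    simp at this
  choose c hc using key
  have piv : ∀ c : {c : Fin r → ZMod 2 // c ≠ 0}, ∃ i, c.1 i ≠ 0 := fun c =>
    Function.ne_iff.1 c.2
  choose p hp using piv
  cases r with
  | zero =>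
    have : IsEmpty {A : Matrix (Fin 0) (Fin d) (ZMod 2) //
        (fun _ => 1 : Fin d → ZMod 2) ∈ Submodule.span (ZMod 2) (Set.range A)} :=
      ⟨fun A => (p (c A)).elim0⟩
    simp
  | succ n =>
    let f : {A : Matrix (Fin (n+1)) (Fin d) (ZMod 2) //
        (fun _ => 1 : Fin d → ZMod 2) ∈ Submodule.span (ZMod 2) (Set.range A)} →
        {c : Fin (n+1) → ZMod 2 // c ≠ 0} × (Fin n → Fin d → ZMod 2) :=
      fun A => (c A, fun j => A.1 ((p (c A)).succAbove j))
    have hf : Function.Injective f := by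
      intro A B hAB
      have h1 : c A = c B := congrArg Prod.fst hAB
      have h2 : (fun j => A.1 ((p (c A)).succAbove j)) =
        (fun j => B.1 ((p (c B)).succAbove j)) := congrArg Prod.snd hAB
      have hA := hc A
      have hB := hc B
      rw [← h1] at h2 hB
      apply Subtype.ext
      funext i
      have h3 : ∀ j, A.1 ((p (c A)).succAbove j) = B.1 ((p (c A)).succAbove j) :=
        fun j => congrFun h2 j
      rcases Fin.eq_self_or_eq_succAbove (p (c A)) i with h | ⟨j, h⟩
      · rw [h]
        funext k
        have e := (hA k).trans (hB k).symm
        rw [Fin.sum_univ_succAbove _ (p (c A)), Fin.sum_univ_succAbove _ (p (c A))] at e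
        simp only [h3] at e
        exact mul_left_cancel₀ (hp (c A)) (add_right_cancel e)
      · rw [h]; exact h3 j
    refine (Nat.card_le_card_of_injective f hf).trans (le_of_eq ?_)
    rw [Nat.card_prod]
    congr 1
    · rw [Nat.card_eq_fintype_card, Fintype.card_subtype_compl]
      simp [ZMod.card]
    · simp [Nat.card_eq_fintype_card, ZMod.card, pow_mul]
end

section
/- Let h : Matrix (Fin r) (Fin d) (ZMod 2) and suppose at least one row of h has odd weight. Then there exists a matrix h' : Matrix (Fin r) (Fin d) (ZMod 2) such that (i) h' has the same kernel as h, i.e. {x | h'.mulVec x = 0} = {x | h.mulVec x = 0} (indeed h' has the same row span as h), and (ii) every row of h' has odd weight. (This is the row-modification step in the proof of Claim 3.6 of the paper: adding a fixed odd-weight row to each even-weight row produces an equivalent parity-check matrix all of whose rows have odd weight.) -/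
theorem exists_equivalent_parity_check_all_rows_odd
    (r d : ℕ) (h : Matrix (Fin r) (Fin d) (ZMod 2))
    (hodd : ∃ i, ∑ j, h i j = 1) :
    ∃ h' : Matrix (Fin r) (Fin d) (ZMod 2),
      Submodule.span (ZMod 2) (Set.range h') = Submodule.span (ZMod 2) (Set.range h) ∧
      {x : Fin d → ZMod 2 | h'.mulVec x = 0} = {x : Fin d → ZMod 2 | h.mulVec x = 0} ∧
      ∀ i, ∑ j, h' i j = 1 := by
  obtain ⟨k, hk⟩ := hodd
  obtain ⟨c, hc⟩ : ∃ c : Fin r → ZMod 2, ∀ i, c i = 1 - ∑ j, h i j := ⟨_, fun _ => rfl⟩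
  have hck : c k = 0 := by rw [hc, hk, sub_self]
  obtain ⟨h', hh⟩ : ∃ h' : Matrix (Fin r) (Fin d) (ZMod 2), ∀ i, h' i = h i + c i • h k :=
    ⟨fun i => h i + c i • h k, fun _ => rfl⟩
  have hhk : h' k = h k := by rw [hh, hck, zero_smul, add_zero]
  have hh2 : ∀ i, h i = h' i - c i • h' k := by
    intro i
    rw [hhk, hh, add_sub_cancel_right]
  refine ⟨h', le_antisymm ?_ ?_, ?_, ?_⟩
  · rw [Submodule.span_le]
    rintro _ ⟨i, rfl⟩
    rw [hh]
    exact Submodule.add_mem _ (Submodule.subset_span ⟨i, rfl⟩)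
      (Submodule.smul_mem _ _ (Submodule.subset_span ⟨k, rfl⟩))
  · rw [Submodule.span_le]
    rintro _ ⟨i, rfl⟩
    rw [hh2]
    exact Submodule.sub_mem _ (Submodule.subset_span ⟨i, rfl⟩)
      (Submodule.smul_mem _ _ (Submodule.subset_span ⟨k, rfl⟩))
  · ext x
    simp only [Set.mem_setOf_eq, funext_iff, Matrix.mulVec, Pi.zero_apply]
    constructor
    · intro H i
      rw [hh2, sub_dotProduct, smul_dotProduct, H, H, smul_zero, sub_zero]
    · intro H i
      rw [hh, add_dotProduct, smul_dotProduct, H, H, smul_zero, add_zero]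
  · intro i
    simp only [hh, Pi.add_apply, Pi.smul_apply, smul_eq_mul, Finset.sum_add_distrib,
      ← Finset.mul_sum, hk, hc]
    ring
end
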